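/- Under the algorithmic setting below, write the set K = {k₀, k₁, k₂, ...} in increasing order. Then r̄_{k_{i+1}} ≤ η r̄_{k_i} for all i for which k_{i+1} exists, and the following three statements are equivalent: (i) K is an infinite set; (ii) lim_{k→∞, k∈K} ‖r(x^k)‖ = 0; (iii) liminf_{k→∞} ‖r(x^k)‖ = 0. -/

import Mathlib

open scoped RealInnerProductSpace
open Filter Metric

noncomputable section

/-- The convex subdifferential of `g` at `y`. -/
def subdiff {n : ℕ} (g : EuclideanSpace ℝ (Fin n) → ℝ) (y : EuclideanSpace ℝ (Fin n)) :
    Set (EuclideanSpace ℝ (Fin n)) :=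
  {v | ∀ z, g y + ⟪v, z - y⟫ ≤ g z}

/-- The proximity operator `prox_g(z)`, the (unique, for convex `g`) minimizer of
`y ↦ g y + (1/2)‖y − z‖²`. -/
noncomputable def proxPt {n : ℕ} (g : EuclideanSpace ℝ (Fin n) → ℝ)
    (z : EuclideanSpace ℝ (Fin n)) : EuclideanSpace ℝ (Fin n) :=
  Classical.epsilon fun p => ∀ y, g p + (1 / 2) * ‖p - z‖ ^ 2 ≤ g y + (1 / 2) * ‖y - z‖ ^ 2

/-- The residual (prox-gradient) mapping `r(x) = x − prox_φ(x − ∇f(x))`. -/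
noncomputable def resid {n : ℕ} (f φ : EuclideanSpace ℝ (Fin n) → ℝ)
    (x : EuclideanSpace ℝ (Fin n)) : EuclideanSpace ℝ (Fin n) :=
  x - proxPt φ (x - gradient f x)

/-- The smallest eigenvalue of a symmetric operator on ℝᵐ, as the infimum of its quadratic
form over the unit sphere. -/
noncomputable def lambdaMin {m : ℕ} (T : EuclideanSpace ℝ (Fin m) →L[ℝ] EuclideanSpace ℝ (Fin m)) :
    ℝ :=
  ⨅ u : {u : EuclideanSpace ℝ (Fin m) // ‖u‖ = 1}, ⟪T u.1, u.1⟫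

theorem aux_phi_cont {n : ℕ} {φ : EuclideanSpace ℝ (Fin n) → ℝ} (hφ : ConvexOn ℝ Set.univ φ) :
    Continuous φ := by
  rw [← continuousOn_univ]
  exact hφ.continuousOn isOpen_univ

theorem aux_phi_lower {n : ℕ} {φ : EuclideanSpace ℝ (Fin n) → ℝ} (hφ : ConvexOn ℝ Set.univ φ) :
    ∃ C : ℝ, 0 ≤ C ∧ ∀ y, -C - C * ‖y‖ ≤ φ y := by
  have hc := aux_phi_cont hφ
  obtain ⟨B, hB⟩ := (isCompact_closedBall (0 : EuclideanSpace ℝ (Fin n)) 1).exists_bound_of_continuousOn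
    hc.continuousOn
  have hB0 : 0 ≤ B := (norm_nonneg _).trans (hB 0 (by simp))
  refine ⟨2 * B, by linarith, fun y => ?_⟩
  by_cases hy : ‖y‖ ≤ 1
  · have h1 := hB y (by simpa using hy)
    rw [Real.norm_eq_abs] at h1
    have := neg_le_of_abs_le h1
    have := norm_nonneg y
    nlinarith
  · push Not at hy
    have hpos : 0 < ‖y‖ := by linarith
    have h0 := hB 0 (by simp)
    have hu := hB (‖y‖⁻¹ • y) (by
      simp only [mem_closedBall, dist_zero_right, norm_smul, norm_inv, norm_norm]
      rw [inv_mul_cancel₀ hpos.ne'])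
    rw [Real.norm_eq_abs, abs_le] at h0 hu
    have hcv := hφ.2 (Set.mem_univ (0 : EuclideanSpace ℝ (Fin n))) (Set.mem_univ y)
      (show 0 ≤ 1 - ‖y‖⁻¹ by
        have := inv_le_one_of_one_le₀ hy.le
        linarith) (show 0 ≤ ‖y‖⁻¹ by positivity) (by ring)
    simp only [smul_zero, zero_add, smul_eq_mul] at hcv
    have h3 : ‖y‖ * φ (‖y‖⁻¹ • y) ≤ (‖y‖ - 1) * φ 0 + φ y := by
      have := mul_le_mul_of_nonneg_left hcv hpos.le
      have e : ‖y‖ * ((1 - ‖y‖⁻¹) * φ 0 + ‖y‖⁻¹ * φ y) = (‖y‖ - 1) * φ 0 + φ y := by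
        field_simp
      linarith
    nlinarith

theorem aux_prox_spec {n : ℕ} {φ : EuclideanSpace ℝ (Fin n) → ℝ} (hφ : ConvexOn ℝ Set.univ φ)
    (z : EuclideanSpace ℝ (Fin n)) (y : EuclideanSpace ℝ (Fin n)) :
    φ (proxPt φ z) + (1 / 2) * ‖proxPt φ z - z‖ ^ 2 ≤ φ y + (1 / 2) * ‖y - z‖ ^ 2 := by
  have hc := aux_phi_cont hφ
  obtain ⟨C, hC, hl⟩ := aux_phi_lower hφ
  have hex : ∃ p, ∀ y, φ p + (1 / 2) * ‖p - z‖ ^ 2 ≤ φ y + (1 / 2) * ‖y - z‖ ^ 2 := by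
    refine Continuous.exists_forall_le (by fun_prop) ?_
    refine tendsto_atTop_mono (f := fun y => ‖y‖ - (C + (C + ‖z‖ + 1) ^ 2 / 2)) ?_ ?_
    · intro y
      have h1 := hl y
      have h2 : ‖y‖ - ‖z‖ ≤ ‖y - z‖ := norm_sub_norm_le y z
      have h3 := norm_nonneg z
      nlinarith [sq_nonneg (‖y - z‖ - (C + 1)), mul_nonneg (by linarith : 0 ≤ C + 1) (by linarith : 0 ≤ ‖y - z‖ - (‖y‖ - ‖z‖)), sq_nonneg ‖z‖]
    · exact tendsto_atTop_add_const_right _ _ (tendsto_norm_cocompact_atTop)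
  exact Classical.epsilon_spec hex y

theorem aux_prox_ineq {n : ℕ} {φ : EuclideanSpace ℝ (Fin n) → ℝ} (hφ : ConvexOn ℝ Set.univ φ)
    (z : EuclideanSpace ℝ (Fin n)) (y : EuclideanSpace ℝ (Fin n)) :
    ⟪z - proxPt φ z, y - proxPt φ z⟫ ≤ φ y - φ (proxPt φ z) := by
  set p := proxPt φ z with hp
  have key : ∀ t : ℝ, 0 < t → t ≤ 1 →
      ⟪z - p, y - p⟫ ≤ φ y - φ p + t * (‖y - p‖ ^ 2 / 2) := by
    intro t ht ht1
    have h1 := aux_prox_spec hφ z (p + t • (y - p))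
    rw [← hp] at h1
    have h2 := hφ.2 (Set.mem_univ p) (Set.mem_univ y) (show 0 ≤ 1 - t by linarith) ht.le
      (by ring)
    have e1 : (1 - t) • p + t • y = p + t • (y - p) := by module
    rw [e1] at h2
    simp only [smul_eq_mul] at h2
    have e2 : p + t • (y - p) - z = (p - z) + t • (y - p) := by abel
    have e3 : ‖p + t • (y - p) - z‖ ^ 2 = ‖p - z‖ ^ 2 - 2 * (t * ⟪z - p, y - p⟫)
        + t ^ 2 * ‖y - p‖ ^ 2 := by
      rw [e2, norm_add_sq_real, inner_smul_right, norm_smul, mul_pow, Real.norm_eq_abs, sq_abs,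
        ← neg_sub z p, inner_neg_left]
      ring
    rw [e3] at h1
    have h4 : t * ⟪z - p, y - p⟫ ≤ t * (φ y - φ p + t * (‖y - p‖ ^ 2 / 2)) := by
      nlinarith
    exact le_of_mul_le_mul_left h4 ht
  have ht : Tendsto (fun t : ℝ => φ y - φ p + t * (‖y - p‖ ^ 2 / 2)) (nhdsWithin 0 (Set.Ioi 0))
      (nhds (φ y - φ p)) := by
    have : Continuous (fun t : ℝ => φ y - φ p + t * (‖y - p‖ ^ 2 / 2)) := by fun_prop
    have h := (this.tendsto 0).mono_left (nhdsWithin_le_nhds (s := Set.Ioi 0))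
    simpa using h
  refine ge_of_tendsto ht ?_
  filter_upwards [Ioc_mem_nhdsGT (zero_lt_one (α := ℝ))] with t ht
  exact key t ht.1 ht.2

theorem aux_prox_nonexp {n : ℕ} {φ : EuclideanSpace ℝ (Fin n) → ℝ} (hφ : ConvexOn ℝ Set.univ φ)
    (z w : EuclideanSpace ℝ (Fin n)) : ‖proxPt φ z - proxPt φ w‖ ≤ ‖z - w‖ := by
  have h1 := aux_prox_ineq hφ z (proxPt φ w)
  have h2 := aux_prox_ineq hφ w (proxPt φ z)
  set p := proxPt φ z
  set s := proxPt φ w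
  have e : ⟪z - p, s - p⟫ + ⟪w - s, p - s⟫ = ‖p - s‖ ^ 2 - ⟪z - w, p - s⟫ := by
    rw [← real_inner_self_eq_norm_sq]
    simp only [inner_sub_left, inner_sub_right]
    ring
  have h3 := real_inner_le_norm (z - w) (p - s)
  have h4 : ‖p - s‖ * ‖p - s‖ ≤ ‖z - w‖ * ‖p - s‖ := by nlinarith
  by_cases h0 : ‖p - s‖ = 0
  · rw [h0]; positivity
  · exact le_of_mul_le_mul_right h4 (lt_of_le_of_ne (norm_nonneg _) (Ne.symm h0))

theorem aux_grad {n : ℕ} {f : EuclideanSpace ℝ (Fin n) → ℝ} (hf : ContDiff ℝ 2 f) :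
    ContDiff ℝ 1 (gradient f) := by
  let L : (StrongDual ℝ (EuclideanSpace ℝ (Fin n))) →ₗ[ℝ] EuclideanSpace ℝ (Fin n) :=
    { toFun := (InnerProductSpace.toDual ℝ (EuclideanSpace ℝ (Fin n))).symm
      map_add' := by intro a b; simp
      map_smul' := by intro a b; simp }
  have h1 : ContDiff ℝ 1 (fderiv ℝ f) := hf.fderiv_right (by norm_num [one_add_one_eq_two])
  exact (LinearMap.toContinuousLinearMap L).contDiff.comp h1

theorem aux_taylor {n : ℕ} {f : EuclideanSpace ℝ (Fin n) → ℝ} (hf : ContDiff ℝ 2 f)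
    (xs : EuclideanSpace ℝ (Fin n)) :
    ∃ L s : ℝ, 0 ≤ L ∧ 0 < s ∧ ∀ x ∈ ball xs s, ∀ y ∈ ball xs s,
      |f y - f x - ⟪gradient f x, y - x⟫| ≤ L * ‖y - x‖ ^ 2 := by
  have h1 : ContDiff ℝ 1 (fderiv ℝ f) := hf.fderiv_right (by norm_num [one_add_one_eq_two])
  obtain ⟨L, t, ht, hL⟩ := (h1.contDiffAt (x := xs)).exists_lipschitzOnWith
  obtain ⟨s, hs, hst⟩ := Metric.mem_nhds_iff.1 ht
  refine ⟨L, s, L.2, hs, fun x hx y hy => ?_⟩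
  have hseg : segment ℝ x y ⊆ ball xs s := (convex_ball xs s).segment_subset hx hy
  have hd : Differentiable ℝ f := hf.differentiable (by norm_num)
  have h := (convex_segment x y).norm_image_sub_le_of_norm_fderiv_le' (𝕜 := ℝ) (f := f)
    (φ := fderiv ℝ f x) (C := L * ‖y - x‖) (fun z _ => hd z) (fun z hz => by
      have h2 := hL.norm_sub_le (hst (hseg hz)) (hst hx)
      refine h2.trans (mul_le_mul_of_nonneg_left ?_ L.2)
      exact norm_sub_le_of_mem_segment hz) (left_mem_segment ℝ x y)
    (right_mem_segment ℝ x y)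
  have e : fderiv ℝ f x (y - x) = ⟪gradient f x, y - x⟫ := by
    rw [← toDual_gradient]; rfl
  rw [e, Real.norm_eq_abs] at h
  calc _ ≤ _ := h
    _ = _ := by ring

theorem aux_lambdaMin {m : ℕ}
    (T : EuclideanSpace ℝ (Fin m) →L[ℝ] EuclideanSpace ℝ (Fin m)) : -‖T‖ ≤ lambdaMin T := by
  unfold lambdaMin
  rcases isEmpty_or_nonempty {u : EuclideanSpace ℝ (Fin m) // ‖u‖ = 1} with h | h
  · rw [Real.iInf_of_isEmpty]; simp
  · refine le_ciInf fun u => ?_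
    have h1 := abs_real_inner_le_norm (T u.1) u.1
    have h2 := T.le_opNorm u.1
    rw [u.2] at h1 h2
    have := (abs_le.1 h1).1
    linarith

theorem aux_resid_le {n : ℕ} {φ : EuclideanSpace ℝ (Fin n) → ℝ} (hφ : ConvexOn ℝ Set.univ φ)
    (g x xh : EuclideanSpace ℝ (Fin n))
    (G : EuclideanSpace ℝ (Fin n) →L[ℝ] EuclideanSpace ℝ (Fin n)) :
    ‖x - proxPt φ (x - g)‖ ≤ ‖xh - proxPt φ (xh - g - G (xh - x))‖ + (2 + ‖G‖) * ‖xh - x‖ := by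
  have h1 := aux_prox_nonexp hφ (xh - g - G (xh - x)) (x - g)
  have e1 : xh - g - G (xh - x) - (x - g) = (xh - x) - G (xh - x) := by abel
  rw [e1] at h1
  have h2 := norm_sub_le (xh - x) (G (xh - x))
  have h3 := G.le_opNorm (xh - x)
  have e2 : x - proxPt φ (x - g) = (xh - proxPt φ (xh - g - G (xh - x))) +
      ((proxPt φ (xh - g - G (xh - x)) - proxPt φ (x - g)) - (xh - x)) := by abel
  rw [e2]
  have h4 := norm_add_le (xh - proxPt φ (xh - g - G (xh - x)))
    ((proxPt φ (xh - g - G (xh - x)) - proxPt φ (x - g)) - (xh - x))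
  have h5 := norm_sub_le (proxPt φ (xh - g - G (xh - x)) - proxPt φ (x - g)) (xh - x)
  linarith

theorem aux_evt_bound {n : ℕ} {E : Type*} [NormedAddCommGroup E]
    {x : ℕ → EuclideanSpace ℝ (Fin n)} {xs : EuclideanSpace ℝ (Fin n)}
    (hx : Tendsto x atTop (nhds xs)) {g : EuclideanSpace ℝ (Fin n) → E} (hg : Continuous g) :
    ∃ C : ℝ, 0 ≤ C ∧ ∀ᶠ k in atTop, ‖g (x k)‖ ≤ C := by
  have h := ((hg.norm.tendsto xs).comp hx)
  refine ⟨‖g xs‖ + 1, by positivity, ?_⟩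
  filter_upwards [h.eventually (gt_mem_nhds (lt_add_one ‖g xs‖))] with k hk
  exact hk.le

/-- Descent proportional to the step length forces convergence of the iterates. -/
theorem aux_conv {n : ℕ} {F : EuclideanSpace ℝ (Fin n) → ℝ} (hF : BddBelow (Set.range F))
    (x : ℕ → EuclideanSpace ℝ (Fin n)) (c : ℝ) (hc : 0 < c) (k0 : ℕ)
    (h : ∀ k, k0 ≤ k → c * ‖x (k + 1) - x k‖ ≤ F (x k) - F (x (k + 1))) :
    ∃ xs, Tendsto x atTop (nhds xs) := by
  obtain ⟨b, hb⟩ := hF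
  have hsum : Summable fun k => dist (x (k + k0)) (x (k.succ + k0)) := by
    refine summable_of_sum_range_le (c := (F (x k0) - b) / c) (fun _ => dist_nonneg) fun N => ?_
    have key : ∀ N : ℕ, c * ∑ i ∈ Finset.range N, dist (x (i + k0)) (x (i.succ + k0)) ≤
        F (x k0) - F (x (N + k0)) := by
      intro N
      induction N with
      | zero => simp
      | succ N ih =>
        rw [Finset.sum_range_succ, mul_add]
        have h1 := h (N + k0) (by omega)
        have e : N + k0 + 1 = N.succ + k0 := by omega
        rw [e, ← dist_eq_norm, dist_comm] at h1
        linarith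
    rw [le_div_iff₀ hc]
    have := key N
    have := hb ⟨x (N + k0), rfl⟩
    linarith
  obtain ⟨xs, hxs⟩ := cauchySeq_tendsto_of_complete (cauchySeq_of_summable_dist hsum)
  exact ⟨xs, (tendsto_add_atTop_iff_nat k0).1 hxs⟩

/-- The arithmetic of one iteration with large regularization: the step is short. -/
theorem aux_short (α μ B P Q s D : ℝ) (hα : 0 < α) (hs : 0 < s) (hP : 0 ≤ P) (hQ : 0 ≤ Q)
    (hμB : B ≤ μ) (hμ : P / s ^ 2 + Q / s < α * μ / 2)
    (h : α * μ / 2 * D ^ 2 ≤ P + Q * D - 1 / 2 * ((μ - B) * D ^ 2)) : D < s := by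
  by_contra hD
  push Not at hD
  have h1 : 0 ≤ (μ - B) * D ^ 2 := mul_nonneg (by linarith) (sq_nonneg _)
  have hD0 : 0 < D := by linarith
  have h2 : P ≤ P / s ^ 2 * D ^ 2 := by
    rw [div_mul_eq_mul_div, le_div_iff₀ (by positivity)]
    exact mul_le_mul_of_nonneg_left (by gcongr) hP
  have h3 : Q * D ≤ Q / s * D ^ 2 := by
    rw [div_mul_eq_mul_div, le_div_iff₀ (by positivity)]
    have : Q * D * s ≤ Q * D * D := mul_le_mul_of_nonneg_left hD (by positivity)
    nlinarith
  have h4 : (P / s ^ 2 + Q / s) * D ^ 2 < α * μ / 2 * D ^ 2 :=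
    mul_lt_mul_of_pos_right hμ (by positivity)
  nlinarith

set_option maxHeartbeats 4000000 in
/-- Lemma 3.4: writing `K = {k₀ < k₁ < ...}`, consecutive elements satisfy
`r̄_{k_{i+1}} ≤ η r̄_{k_i}`, and the following are equivalent: (i) `K` is infinite;
(ii) `‖r(xᵏ)‖ → 0` along `k ∈ K`; (iii) `liminf_{k→∞} ‖r(xᵏ)‖ = 0`. -/
theorem stmt_4 {n m : ℕ}
    -- problem data: f(x) = ψ(Ax − b), F = f + φ bounded below, φ convex, ψ C²
    (ψ : EuclideanSpace ℝ (Fin m) → ℝ)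
    (A : EuclideanSpace ℝ (Fin n) →L[ℝ] EuclideanSpace ℝ (Fin m))
    (b : EuclideanSpace ℝ (Fin m))
    (φ : EuclideanSpace ℝ (Fin n) → ℝ)
    (hψ : ContDiff ℝ 2 ψ) (hφ : ConvexOn ℝ Set.univ φ)
    (f F : EuclideanSpace ℝ (Fin n) → ℝ)
    (hf : ∀ y, f y = ψ (A y - b)) (hF : ∀ y, F y = f y + φ y)
    (hFbdd : BddBelow (Set.range F))
    -- algorithm parameters
    (c₁ c₂ σ₁ σ₂ η θ α a νmin ν₀ νbar δ τ pmin κ : ℝ)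
    (hc₁ : 0 < c₁) (hc₁' : c₁ < 1) (hc₂ : c₁ < c₂) (hc₂' : c₂ < 1)
    (hσ₁ : 0 < σ₁) (hσ₁' : σ₁ < 1) (hσ₂ : 1 < σ₂)
    (hη : 0 < η) (hη' : η < 1) (hθ : 0 < θ) (hθ' : θ < 1)
    (hα : 0 < α) (hα' : α < 1) (ha : 1 ≤ a)
    (hνmin : 0 < νmin) (hν₀a : νmin ≤ ν₀) (hν₀b : ν₀ ≤ νbar)
    (hδ0 : 0 < δ) (hδ1 : δ ≤ 1) (hτ : δ ≤ τ)
    (hpmin : 0 < pmin) (hpmin' : pmin < 1 / 2) (hκ : 1 + δ < κ)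
    -- iterates and regularization sequences
    (x xhat : ℕ → EuclideanSpace ℝ (Fin n)) (ν rbar μ : ℕ → ℝ)
    (hν0 : ν 0 = ν₀) (hrbar0 : rbar 0 = ‖resid f φ (x 0)‖)
    (hμ : ∀ k, μ k = ν k * rbar k ^ δ)
    -- Λ_k, H_k + μ_k I =: G_k, the models q_k, q̂_k, and the subproblem residual R_k
    (Λ : ℕ → ℝ)
    (hΛ : ∀ k, Λ k = a * max (-(lambdaMin (fderiv ℝ (gradient ψ) (A (x k) - b)))) 0)
    (G : ℕ → EuclideanSpace ℝ (Fin n) →L[ℝ] EuclideanSpace ℝ (Fin n))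
    (hG : ∀ k, G k = fderiv ℝ (gradient f) (x k)
        + Λ k • ((ContinuousLinearMap.adjoint A).comp A)
        + μ k • ContinuousLinearMap.id ℝ (EuclideanSpace ℝ (Fin n)))
    (q qhat : ℕ → EuclideanSpace ℝ (Fin n) → ℝ)
    (hq : ∀ k y, q k y = f (x k) + ⟪gradient f (x k), y - x k⟫
        + (1 / 2) * ⟪y - x k, (fderiv ℝ (gradient f) (x k)) (y - x k)⟫ + φ y)
    (hqhat : ∀ k y, qhat k y = f (x k) + ⟪gradient f (x k), y - x k⟫
        + (1 / 2) * ⟪y - x k, (G k) (y - x k)⟫ + φ y)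
    (R : ℕ → EuclideanSpace ℝ (Fin n) → EuclideanSpace ℝ (Fin n))
    (hR : ∀ k y, R k y = y - proxPt φ (y - gradient f (x k) - (G k) (y - x k)))
    -- the inexactness criteria satisfied by x̂ᵏ
    (hinex1 : ∀ k, ‖R k (xhat k)‖ ≤
        θ * min ‖resid f φ (x k)‖ (‖resid f φ (x k)‖ ^ (1 + τ)))
    (hinex2 : ∀ k, α * μ k / 2 * ‖xhat k - x k‖ ^ 2 ≤ F (x k) - qhat k (xhat k))
    -- dᵏ, pred_k, ared_k, ρ_k
    (d : ℕ → EuclideanSpace ℝ (Fin n)) (hd : ∀ k, d k = xhat k - x k)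
    (pred ared ρ : ℕ → ℝ)
    (hpred : ∀ k, pred k = F (x k) - q k (xhat k))
    (hared : ∀ k, ared k = F (x k) - F (xhat k))
    (hρ : ∀ k, ρ k = ared k / pred k)
    -- update rules (unsuccessful / successful / highly successful iterations)
    (unsucc : ℕ → Prop)
    (hunsucc : ∀ k, unsucc k ↔
        pred k ≤ pmin * (1 - θ) * ‖d k‖ *
          min ‖resid f φ (x k)‖ (‖resid f φ (x k)‖ ^ κ) ∨ ρ k ≤ c₁)
    (hupd : ∀ k,
        (unsucc k → x (k + 1) = x k ∧ ν (k + 1) = σ₂ * ν k) ∧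
        (¬unsucc k → x (k + 1) = xhat k ∧
          (ρ k ≤ c₂ → ν (k + 1) = min (ν k) νbar) ∧
          (c₂ < ρ k → ν (k + 1) = min (max (σ₁ * ν k) νmin) νbar)))
    (hrbarupd : ∀ k,
        (‖resid f φ (x (k + 1))‖ ≤ η * rbar k → rbar (k + 1) = ‖resid f φ (x (k + 1))‖) ∧
        (¬‖resid f φ (x (k + 1))‖ ≤ η * rbar k → rbar (k + 1) = rbar k))
    -- no iterate is stationary (otherwise the algorithm terminates)
    (hrne : ∀ k, resid f φ (x k) ≠ 0)
    (K : Set ℕ)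
    (hK : K = {0} ∪ {k | 1 ≤ k ∧ ‖resid f φ (x k)‖ ≤ η * rbar (k - 1)}) :
    (∀ k ∈ K, ∀ k' ∈ K, k < k' → (∀ j ∈ K, ¬(k < j ∧ j < k')) →
        rbar k' ≤ η * rbar k) ∧
    List.TFAE [
      K.Infinite,
      Tendsto (fun k => ‖resid f φ (x k)‖) (atTop ⊓ 𝓟 K) (nhds 0),
      Filter.liminf (fun k => ‖resid f φ (x k)‖) atTop = 0] := by
  have hfC : ContDiff ℝ 2 f := by
    have : f = fun y => ψ (A y - b) := funext hf
    rw [this]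
    exact hψ.comp (A.contDiff.sub contDiff_const)
  have hrpos : ∀ k, 0 < ‖resid f φ (x k)‖ := fun k => norm_pos_iff.2 (hrne k)
  have hKs : ∀ k, k + 1 ∈ K ↔ ‖resid f φ (x (k + 1))‖ ≤ η * rbar k := by
    intro k; rw [hK]; simp
  have hKr : ∀ k ∈ K, rbar k = ‖resid f φ (x k)‖ := by
    intro k hk
    cases k with
    | zero => exact hrbar0
    | succ k => exact (hrbarupd k).1 ((hKs k).1 hk)
  have hNK : ∀ k, k + 1 ∉ K → rbar (k + 1) = rbar k := by
    intro k hk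
    exact (hrbarupd k).2 (fun h => hk ((hKs k).2 h))
  have hrbpos : ∀ k, 0 < rbar k := by
    intro k
    induction k with
    | zero => rw [hrbar0]; exact hrpos 0
    | succ k ih =>
      by_cases h : k + 1 ∈ K
      · rw [hKr _ h]; exact hrpos _
      · rw [hNK _ h]; exact ih
  have hKdec : ∀ k, k + 1 ∈ K → rbar (k + 1) ≤ η * rbar k := by
    intro k hk
    rw [hKr _ hk]; exact (hKs k).1 hk
  have hanti : Antitone rbar := by
    refine antitone_nat_of_succ_le fun k => ?_
    by_cases h : k + 1 ∈ K
    · have := hKdec k h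
      have := hrbpos k
      nlinarith
    · exact (hNK _ h).le
  have hνge : ∀ k, νmin ≤ ν k := by
    intro k
    induction k with
    | zero => rw [hν0]; exact hν₀a
    | succ k ih =>
      by_cases h : unsucc k
      · rw [((hupd k).1 h).2]; nlinarith
      · obtain ⟨-, h1, h2⟩ := (hupd k).2 h
        rcases le_or_gt (ρ k) c₂ with h3 | h3
        · rw [h1 h3]; exact le_min ih (by linarith)
        · rw [h2 h3]; exact le_min (le_max_right _ _) (by linarith)
  have hνsucc : ∀ k, ¬ unsucc k → ν (k + 1) ≤ νbar := by
    intro k h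
    obtain ⟨-, h1, h2⟩ := (hupd k).2 h
    rcases le_or_gt (ρ k) c₂ with h3 | h3
    · rw [h1 h3]; exact min_le_right _ _
    · rw [h2 h3]; exact min_le_right _ _
  have hΛ0 : ∀ k, 0 ≤ Λ k := by
    intro k; rw [hΛ]
    exact mul_nonneg (by linarith) (le_max_right _ _)
  -- K is always infinite
  have hKinf : K.Infinite := by
    by_contra hfin
    rw [Set.not_infinite] at hfin
    obtain ⟨k0, hk0⟩ := hfin.bddAbove
    have hnot : ∀ k, k0 ≤ k → k + 1 ∉ K := fun k hk h => by
      have := hk0 h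
      omega
    have hconst : ∀ k, k0 ≤ k → rbar k = rbar k0 := by
      intro k hk
      induction k, hk using Nat.le_induction with
      | base => rfl
      | succ k hk ih => rw [hNK k (hnot k hk), ih]
    set rb := rbar k0 with hrb
    have hrb0 : 0 < rb := hrbpos k0
    set w := rb ^ δ with hw
    have hw0 : 0 < w := Real.rpow_pos_of_pos hrb0 _
    set ε := η * rb with hε
    have hε0 : 0 < ε := by positivity
    have hrlow : ∀ k, k0 + 1 ≤ k → ε ≤ ‖resid f φ (x k)‖ := by
      intro k hk
      obtain ⟨j, rfl⟩ : ∃ j, k = j + 1 := ⟨k - 1, by omega⟩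
      have h1 := hnot j (by omega)
      rw [hKs, hconst j (by omega)] at h1
      exact (not_le.1 h1).le
    have hμk : ∀ k, k0 ≤ k → μ k = ν k * w := by
      intro k hk; rw [hμ, hconst k hk]
    have hμpos : ∀ k, k0 ≤ k → 0 < μ k := by
      intro k hk; rw [hμk k hk]
      exact mul_pos (by linarith [hνge k]) hw0
    -- successful iterations give descent
    set C := pmin * (1 - θ) * min ε (ε ^ κ) with hC
    have hC0 : 0 < C := by
      have : 0 < ε ^ κ := Real.rpow_pos_of_pos hε0 _
      have : 0 < min ε (ε ^ κ) := lt_min hε0 this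
      have : 0 < 1 - θ := by linarith
      positivity
    have hdesc : ∀ k, k0 + 1 ≤ k → c₁ * C * ‖x (k + 1) - x k‖ ≤ F (x k) - F (x (k + 1)) := by
      intro k hk
      by_cases h : unsucc k
      · rw [((hupd k).1 h).1]; simp
      · have hx1 := ((hupd k).2 h).1
        rw [hunsucc] at h
        push Not at h
        obtain ⟨h1, h2⟩ := h
        rw [hx1, ← hd, ← hared]
        have hr := hrlow k hk
        have hmin : min ε (ε ^ κ) ≤ min ‖resid f φ (x k)‖ (‖resid f φ (x k)‖ ^ κ) :=
          min_le_min hr (Real.rpow_le_rpow hε0.le hr (by linarith))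
        have h3 : C * ‖d k‖ ≤ pmin * (1 - θ) * ‖d k‖ *
            min ‖resid f φ (x k)‖ (‖resid f φ (x k)‖ ^ κ) := by
          have h4 : 0 ≤ pmin * (1 - θ) * ‖d k‖ :=
            mul_nonneg (mul_nonneg hpmin.le (by linarith)) (norm_nonneg _)
          calc C * ‖d k‖ = pmin * (1 - θ) * ‖d k‖ * min ε (ε ^ κ) := by rw [hC]; ring
            _ ≤ _ := mul_le_mul_of_nonneg_left hmin h4
        have hp0 : 0 < pred k := by
          have : 0 ≤ C * ‖d k‖ := by positivity
          linarith
        rw [hρ, lt_div_iff₀ hp0] at h2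
        have : c₁ * (C * ‖d k‖) ≤ c₁ * pred k := mul_le_mul_of_nonneg_left (by linarith) hc₁.le
        linarith
    obtain ⟨xs, hxs⟩ := aux_conv hFbdd x (c₁ * C) (by positivity) (k0 + 1) hdesc
    -- bounds near the limit
    have hgC := aux_grad hfC
    have hgψ := aux_grad hψ
    obtain ⟨BH, hBH0, hBH⟩ := aux_evt_bound hxs (hgC.continuous_fderiv one_ne_zero)
    obtain ⟨Bψ, hBψ0, hBψ⟩ := aux_evt_bound (g := fun y => fderiv ℝ (gradient ψ) (A y - b)) hxs
      ((hgψ.continuous_fderiv one_ne_zero).comp (A.continuous.sub continuous_const))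
    obtain ⟨Bg, hBg0, hBg⟩ := aux_evt_bound hxs hgC.continuous
    obtain ⟨Bφ, hBφ0, hBφ⟩ := aux_evt_bound hxs (aux_phi_cont hφ)
    obtain ⟨Bx, hBx0, hBx⟩ := aux_evt_bound (g := fun y => y) hxs continuous_id
    obtain ⟨Cφ, hCφ0, hCφ⟩ := aux_phi_lower hφ
    obtain ⟨L, s, hL0, hs0, hTay⟩ := aux_taylor hfC xs
    set AA := (ContinuousLinearMap.adjoint A).comp A with hAA
    set B := BH + a * Bψ * ‖AA‖ with hB
    have hB0 : 0 ≤ B := by positivity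
    have hBHB : BH ≤ B := by
      have : 0 ≤ a * Bψ * ‖AA‖ := by positivity
      linarith
    have hAApos : ∀ v, 0 ≤ ⟪v, AA v⟫ := by
      intro v
      rw [hAA, ContinuousLinearMap.comp_apply, ContinuousLinearMap.adjoint_inner_right]
      exact real_inner_self_nonneg
    have hGn : ∀ᶠ k in atTop, ‖G k‖ ≤ B + μ k := by
      filter_upwards [hBH, hBψ, eventually_ge_atTop k0] with k h1 h2 hk
      have hΛle : Λ k ≤ a * Bψ := by
        rw [hΛ]
        refine mul_le_mul_of_nonneg_left (max_le ?_ hBψ0) (by linarith)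
        have := aux_lambdaMin (fderiv ℝ (gradient ψ) (A (x k) - b))
        linarith
      rw [hG]
      refine (norm_add_le _ _).trans ?_
      have h3 := norm_add_le (fderiv ℝ (gradient f) (x k)) (Λ k • AA)
      have h4 : ‖Λ k • AA‖ ≤ a * Bψ * ‖AA‖ := by
        rw [norm_smul, Real.norm_eq_abs, abs_of_nonneg (hΛ0 k)]
        exact mul_le_mul_of_nonneg_right hΛle (norm_nonneg _)
      have h5 : ‖μ k • ContinuousLinearMap.id ℝ (EuclideanSpace ℝ (Fin n))‖ ≤ μ k := by
        rw [norm_smul, Real.norm_eq_abs, abs_of_pos (hμpos k hk)]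
        have := ContinuousLinearMap.norm_id_le (𝕜 := ℝ) (E := EuclideanSpace ℝ (Fin n))
        nlinarith [hμpos k hk]
      linarith
    have hGH : ∀ k v, ⟪v, fderiv ℝ (gradient f) (x k) v⟫ + μ k * ‖v‖ ^ 2 ≤ ⟪v, G k v⟫ := by
      intro k v
      rw [hG]
      simp only [ContinuousLinearMap.add_apply, ContinuousLinearMap.smul_apply, inner_add_right,
        inner_smul_right, ContinuousLinearMap.id_apply, real_inner_self_eq_norm_sq]
      have := mul_nonneg (hΛ0 k) (hAApos v)
      linarith
    have hHabs : ∀ᶠ k in atTop, ∀ v, |⟪v, fderiv ℝ (gradient f) (x k) v⟫| ≤ BH * ‖v‖ ^ 2 := by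
      filter_upwards [hBH] with k h1 v
      have h2 := abs_real_inner_le_norm v (fderiv ℝ (gradient f) (x k) v)
      have h3 := (fderiv ℝ (gradient f) (x k)).le_of_opNorm_le h1 v
      have h4 := mul_le_mul_of_nonneg_left h3 (norm_nonneg v)
      calc _ ≤ _ := h2
        _ ≤ _ := h4
        _ = _ := by ring
    -- lower bound on the step
    have hlow : ∀ᶠ k in atTop, (1 - θ) * ‖resid f φ (x k)‖ ≤ (2 + B + μ k) * ‖d k‖ := by
      filter_upwards [hGn] with k h1
      have h2 := aux_resid_le hφ (gradient f (x k)) (x k) (xhat k) (G k)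
      rw [← hR, ← hd] at h2
      have h3 := hinex1 k
      have h4 : θ * min ‖resid f φ (x k)‖ (‖resid f φ (x k)‖ ^ (1 + τ)) ≤
          θ * ‖resid f φ (x k)‖ := mul_le_mul_of_nonneg_left (min_le_left _ _) hθ.le
      have h5 : (2 + ‖G k‖) * ‖d k‖ ≤ (2 + B + μ k) * ‖d k‖ :=
        mul_le_mul_of_nonneg_right (by linarith) (norm_nonneg _)
      have h6 : ‖resid f φ (x k)‖ = ‖x k - proxPt φ (x k - gradient f (x k))‖ := rfl
      linarith
    -- large regularization implies success
    have hclaim : ∃ M : ℝ, ∀ᶠ k in atTop, M ≤ ν k → ¬ unsucc k := by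
      set P := Bφ + Cφ + Cφ * Bx with hP
      set Q := Cφ + Bg with hQ
      have hP0 : 0 ≤ P := by positivity
      have hQ0 : 0 ≤ Q := by positivity
      set sh := s / 2 with hsh
      have hsh_pos : 0 < sh := by positivity
      obtain ⟨N, hN⟩ : ∃ N : ℝ, ∀ t, N ≤ t → B ≤ t ∧ P / sh ^ 2 + Q / sh < α * t / 2 ∧
          2 + B ≤ α * t ∧ L + BH / 2 < (1 - c₁) * t / 2 := by
        have e1 : ∀ᶠ t : ℝ in atTop, P / sh ^ 2 + Q / sh < α * t / 2 := by
          have : Tendsto (fun t : ℝ => α * t / 2) atTop atTop :=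
            (tendsto_id.const_mul_atTop hα).atTop_div_const (by norm_num)
          exact this.eventually_gt_atTop _
        have e2 : ∀ᶠ t : ℝ in atTop, 2 + B ≤ α * t :=
          (tendsto_id.const_mul_atTop hα).eventually_ge_atTop _
        have e3 : ∀ᶠ t : ℝ in atTop, L + BH / 2 < (1 - c₁) * t / 2 := by
          have : Tendsto (fun t : ℝ => (1 - c₁) * t / 2) atTop atTop :=
            (tendsto_id.const_mul_atTop (by linarith)).atTop_div_const (by norm_num)
          exact this.eventually_gt_atTop _
        exact eventually_atTop.1 ((eventually_ge_atTop B).and (e1.and (e2.and e3)))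
      refine ⟨N / w, ?_⟩
      filter_upwards [hHabs, hlow, hBg, hBφ, hBx, eventually_ge_atTop (k0 + 1),
        hxs.eventually (ball_mem_nhds xs hsh_pos)] with k hH hlo hg hph hxb hk hball hM
      have hμN : N ≤ μ k := by
        rw [hμk k (by omega)]
        exact (div_le_iff₀ hw0).1 hM
      obtain ⟨n1, n2, n3, n4⟩ := hN _ hμN
      have hμp := hμpos k (by omega)
      have hdn := norm_nonneg (d k)
      have hin := hinex2 k
      have hHd := abs_le.1 (hH (d k))
      have hGd := hGH k (d k)
      rw [hqhat, hF] at hin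
      rw [← hd] at hin
      have hxh : xhat k = x k + d k := by rw [hd]; abel
      -- the step is short
      have hshort : ‖d k‖ < sh := by
        refine aux_short α (μ k) B P Q sh ‖d k‖ hα hsh_pos hP0 hQ0 n1 n2 ?_
        have i1 := (abs_le.1 ((abs_real_inner_le_norm (gradient f (x k)) (d k)).trans
          (mul_le_mul_of_nonneg_right hg hdn))).1
        have i2 := hCφ (xhat k)
        have i3 : ‖xhat k‖ ≤ Bx + ‖d k‖ := by
          rw [hxh]; exact (norm_add_le _ _).trans (by linarith)
        have i4 : φ (x k) ≤ Bφ := (le_abs_self _).trans hph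
        have i5 : Cφ * ‖xhat k‖ ≤ Cφ * (Bx + ‖d k‖) := mul_le_mul_of_nonneg_left i3 hCφ0
        have i6 : BH * ‖d k‖ ^ 2 ≤ B * ‖d k‖ ^ 2 :=
          mul_le_mul_of_nonneg_right hBHB (sq_nonneg _)
        rw [hP, hQ]
        linarith
      -- predicted decrease
      have hpr : (1 + α) * μ k / 2 * ‖d k‖ ^ 2 ≤ pred k := by
        rw [hpred, hq, hF, ← hd]
        linarith
      have hdpos : 0 < ‖d k‖ := by
        rcases hdn.eq_or_lt with h | h
        · rw [← h, mul_zero] at hlo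
          have := mul_pos (by linarith : 0 < 1 - θ) (hrpos k)
          linarith
        · exact h
      have hpr2 : 1 / 2 * (1 - θ) * ‖resid f φ (x k)‖ * ‖d k‖ ≤ pred k := by
        have j1 : (1 - θ) * ‖resid f φ (x k)‖ ≤ ((1 + α) * μ k) * ‖d k‖ :=
          hlo.trans (mul_le_mul_of_nonneg_right (by linarith) hdn)
        have j2 := mul_le_mul_of_nonneg_right j1 hdn
        linarith
      have hpp : 0 < pred k := by
        have : 0 < (1 + α) * μ k / 2 * ‖d k‖ ^ 2 := by positivity
        linarith
      -- actual decrease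
      have hTk := abs_le.1 (hTay (x k) (ball_subset_ball (by linarith) hball) (xhat k) (by
        rw [dist_eq_norm] at hball
        rw [mem_ball, dist_eq_norm]
        rw [hxh]
        calc ‖x k + d k - xs‖ = ‖(x k - xs) + d k‖ := by congr 1; abel
          _ ≤ ‖x k - xs‖ + ‖d k‖ := norm_add_le _ _
          _ < s := by linarith))
      rw [← hd] at hTk
      have har : pred k - (L + BH / 2) * ‖d k‖ ^ 2 ≤ ared k := by
        rw [hared, hpred, hq, hF, hF, ← hd]
        linarith [hTk.1, hTk.2, hHd.1, hHd.2]
      rw [hunsucc]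
      push Not
      constructor
      · have l1 : pmin * (1 - θ) * ‖d k‖ * min ‖resid f φ (x k)‖ (‖resid f φ (x k)‖ ^ κ) ≤
            pmin * (1 - θ) * ‖d k‖ * ‖resid f φ (x k)‖ :=
          mul_le_mul_of_nonneg_left (min_le_left _ _)
            (mul_nonneg (mul_nonneg hpmin.le (by linarith)) hdn)
        have l2 : pmin * ((1 - θ) * ‖resid f φ (x k)‖ * ‖d k‖) <
            1 / 2 * ((1 - θ) * ‖resid f φ (x k)‖ * ‖d k‖) :=
          mul_lt_mul_of_pos_right hpmin' (mul_pos (mul_pos (by linarith) (hrpos k)) hdpos)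
        linarith
      · rw [hρ, lt_div_iff₀ hpp]
        have l1 : (L + BH / 2) * ‖d k‖ ^ 2 < (1 - c₁) * μ k / 2 * ‖d k‖ ^ 2 :=
          mul_lt_mul_of_pos_right n4 (by positivity)
        have l2 : (1 - c₁) * (μ k / 2 * ‖d k‖ ^ 2) ≤ (1 - c₁) * pred k := by
          refine mul_le_mul_of_nonneg_left ?_ (by linarith)
          have : 0 ≤ α * μ k / 2 * ‖d k‖ ^ 2 := by positivity
          linarith
        linarith
    obtain ⟨M, hM⟩ := hclaim
    obtain ⟨k1, hk1⟩ := eventually_atTop.1 hM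
    have hνpos : ∀ k, 0 < ν k := fun k => hνmin.trans_le (hνge k)
    by_cases hinf : ∃ᶠ k in atTop, ¬ unsucc k
    · -- infinitely many successes: ν is bounded, steps tend to zero
      obtain ⟨k2, hk2, hk2s⟩ := (frequently_atTop.1 hinf) k1
      set V := max νbar (σ₂ * M) with hV
      have hνb : ∀ k, k2 + 1 ≤ k → ν k ≤ V := by
        intro k hk
        induction k, hk using Nat.le_induction with
        | base => exact (hνsucc k2 hk2s).trans (le_max_left _ _)
        | succ k hk ih =>
          by_cases h : unsucc k
          · have : ν k < M := by
              by_contra hc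
              exact hk1 k (by omega) (not_lt.1 hc) h
            rw [((hupd k).1 h).2]
            exact (mul_le_mul_of_nonneg_left this.le (by linarith)).trans (le_max_right _ _)
          · exact (hνsucc k h).trans (le_max_left _ _)
      have hdiff : Tendsto (fun k => (2 + B + V * w) * ‖x (k + 1) - x k‖) atTop (nhds 0) := by
        have h1 := (((tendsto_add_atTop_iff_nat 1).2 hxs).sub hxs).norm.const_mul (2 + B + V * w)
        simpa using h1
      have hsmall := hdiff.eventually (gt_mem_nhds
        (mul_pos (by linarith : 0 < 1 - θ) hε0))
      obtain ⟨k, hk, h1, h2, h3⟩ := (hinf.and_eventually (hsmall.and (hlow.and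
        (eventually_ge_atTop (k2 + 1 + (k0 + 1)))))).exists
      have h4 := ((hupd k).2 hk).1
      rw [h4, ← hd] at h1
      have h5 : μ k ≤ V * w := by
        rw [hμk k (by omega)]
        exact mul_le_mul_of_nonneg_right (hνb k (by omega)) hw0.le
      have h6 : (2 + B + μ k) * ‖d k‖ ≤ (2 + B + V * w) * ‖d k‖ :=
        mul_le_mul_of_nonneg_right (by linarith) (norm_nonneg _)
      have h7 : (1 - θ) * ε ≤ (1 - θ) * ‖resid f φ (x k)‖ :=
        mul_le_mul_of_nonneg_left (hrlow k (by omega)) (by linarith)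
      linarith
    · -- finitely many successes: ν tends to infinity
      rw [not_frequently] at hinf
      push Not at hinf
      obtain ⟨k2, hk2⟩ := eventually_atTop.1 hinf
      have hgrow : ∀ j, ν (k2 + j) = σ₂ ^ j * ν k2 := by
        intro j
        induction j with
        | zero => simp
        | succ j ih =>
          rw [← add_assoc, ((hupd (k2 + j)).1 (hk2 _ (by omega))).2, ih]
          ring
      have ht : Tendsto (fun j : ℕ => σ₂ ^ j * ν k2) atTop atTop :=
        (tendsto_pow_atTop_atTop_of_one_lt hσ₂).atTop_mul_const (hνpos k2)
      obtain ⟨j, h1, h2⟩ := ((ht.eventually_ge_atTop M).and (eventually_ge_atTop k1)).exists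
      rw [← hgrow] at h1
      exact hk1 (k2 + j) (by omega) h1 (hk2 _ (by omega))
  have hfreq : ∃ᶠ k in atTop, k + 1 ∈ K := by
    rw [frequently_atTop]
    intro N
    obtain ⟨k, hk, hkN⟩ := hKinf.exists_gt N
    exact ⟨k - 1, by omega, by rwa [Nat.sub_add_cancel (by omega)]⟩
  have hlim : Tendsto rbar atTop (nhds 0) := by
    have hb : BddBelow (Set.range rbar) := ⟨0, by rintro _ ⟨k, rfl⟩; exact (hrbpos k).le⟩
    have h1 := tendsto_atTop_ciInf hanti hb
    set l := ⨅ i, rbar i with hl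
    have hl0 : 0 ≤ l := le_ciInf fun k => (hrbpos k).le
    have h2 : l ≤ η * l :=
      le_of_tendsto_of_tendsto_of_frequently ((tendsto_add_atTop_iff_nat 1).2 h1)
        (h1.const_mul η) (hfreq.mono fun k hk => hKdec k hk)
    have : l = 0 := by nlinarith
    rwa [this] at h1
  have hii : Tendsto (fun k => ‖resid f φ (x k)‖) (atTop ⊓ 𝓟 K) (nhds 0) := by
    refine (hlim.mono_left inf_le_left).congr' ?_
    exact eventually_inf_principal.2 (Eventually.of_forall fun k hk => hKr k hk)
  have hbd : IsBoundedUnder (· ≥ ·) atTop (fun k => ‖resid f φ (x k)‖) :=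
    isBoundedUnder_of ⟨0, fun k => norm_nonneg _⟩
  have hiii : Filter.liminf (fun k => ‖resid f φ (x k)‖) atTop = 0 := by
    have hfr : ∀ e : ℝ, 0 < e → ∃ᶠ k in atTop, ‖resid f φ (x k)‖ ≤ e := by
      intro e he
      have hfK : ∃ᶠ k in atTop, k ∈ K := by
        rw [Nat.frequently_atTop_iff_infinite]; exact hKinf
      refine (hfK.and_eventually (hlim.eventually (gt_mem_nhds he))).mono ?_
      rintro k ⟨h1, h2⟩
      rw [← hKr k h1]; exact h2.le
    apply le_antisymm
    · refine le_of_forall_pos_le_add fun e he => ?_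
      rw [zero_add]
      exact liminf_le_of_frequently_le (hfr e he) hbd
    · exact le_liminf_of_le (IsCoboundedUnder.of_frequently_le (hfr 1 one_pos))
        (Eventually.of_forall fun k => norm_nonneg _)
  refine ⟨?_, ?_⟩
  · intro k hk k' hk' hlt hno
    obtain ⟨j, rfl⟩ : ∃ j, k' = j + 1 := ⟨k' - 1, by omega⟩
    have hc : ∀ i, k ≤ i → i ≤ j → rbar i = rbar k := by
      intro i hi
      induction i, hi using Nat.le_induction with
      | base => intro _; rfl
      | succ i hi ih =>
        intro hij
        rw [hNK i (fun h => hno _ h ⟨by omega, by omega⟩), ih (by omega)]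
    rw [← hc j (by omega) le_rfl]
    exact hKdec j hk'
  · tfae_have 1 → 2 := fun _ => hii
    tfae_have 2 → 3 := fun _ => hiii
    tfae_have 3 → 1 := fun _ => hKinf
    tfae_finish
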